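/- Let M be an m×n complex matrix with rank(M) = r and let p ≥ r. Equip the space of p×m real matrix pairs (realPart, imagPart) — equivalently p×m complex matrices G with entries whose real and imaginary parts are i.i.d. standard real Gaussians — with the corresponding product Gaussian measure. Then for almost every such G, rank(G·M) = r. -/

import Mathlib

open Matrix MeasureTheory ProbabilityTheory

/-!
Choose `L` and `R` with `L * M * R = 1`, the identity matrix of size `rank M`. For a fixed choice
of `rank M` rows of `G`, the corresponding minor of `G * (M * R)` is a polynomial in the entries of
`G`. It takes the value `1` when the chosen rows form `L`, so it is not the zero polynomial. By
Fubini and induction on the number of variables, a nonzero polynomial vanishes only on a null set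
for a product of measures without point masses, and where the minor does not vanish `G * M` has
rank at least `rank M`.
-/

section PolynomialZeros

variable {R σ : Type*} [MeasurableSpace R]

theorem measurable_mvPolynomial_eval [CommSemiring R] [MeasurableAdd₂ R] [MeasurableMul₂ R]
    (P : MvPolynomial σ R) : Measurable fun x : σ → R => MvPolynomial.eval x P := by
  induction P using MvPolynomial.induction_on with
  | C a => simp only [MvPolynomial.eval_C, measurable_const]
  | add P Q hP hQ => simpa only [map_add] using hP.fun_add hQ
  | mul_X P i hP =>
    simpa only [map_mul, MvPolynomial.eval_X] using hP.fun_mul (measurable_pi_apply i)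

variable [CommRing R] [IsDomain R]

theorem ae_polynomial_eval_ne_zero (μ : Measure R) [NullSingletonClass μ] {p : Polynomial R}
    (hp : p ≠ 0) : ∀ᵐ x ∂μ, p.eval x ≠ 0 :=
  (Polynomial.finite_setOfPred_isRoot hp).countable.ae_notMem μ

variable [MeasurableAdd₂ R] [MeasurableMul₂ R] [MeasurableSingletonClass R]

theorem ae_mvPolynomial_fin_eval_ne_zero {k : ℕ} (μ : Fin k → Measure R) [∀ i, SigmaFinite (μ i)]
    [∀ i, NullSingletonClass (μ i)] {P : MvPolynomial (Fin k) R} (hP : P ≠ 0) :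
    ∀ᵐ x ∂Measure.pi μ, MvPolynomial.eval x P ≠ 0 := by
  induction k with
  | zero =>
    obtain ⟨c, rfl⟩ := MvPolynomial.C_surjective (Fin 0) P
    exact .of_forall fun x => by simpa using hP
  | succ k ih =>
    let split := MeasurableEquiv.piFinSuccAbove (fun _ : Fin (k + 1) => R) 0
    have split_symm_apply (t : R) (y : Fin k → R) : split.symm (t, y) = Fin.cons t y :=
      Fin.insertNth_zero' t y
    have measurableSet_nonzero : MeasurableSet {z : R × (Fin k → R) |
        MvPolynomial.eval (split.symm z) P ≠ 0} :=
      (measurable_mvPolynomial_eval P).comp split.symm.measurable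
        (measurableSet_singleton 0).compl
    have nonzero_on_fibers : ∀ᵐ y ∂Measure.pi fun j : Fin k => μ j.succ, ∀ᵐ t ∂μ 0,
        MvPolynomial.eval (split.symm (t, y)) P ≠ 0 := by
      have hQ : MvPolynomial.finSuccEquiv R k P ≠ 0 := by simpa using hP
      filter_upwards [ih _ (Polynomial.leadingCoeff_ne_zero.mpr hQ)] with y hy
      have fiber_ne_zero : (MvPolynomial.finSuccEquiv R k P).map (MvPolynomial.eval y) ≠ 0 :=
        fun h => hy ((Polynomial.coeff_map _ _).symm.trans (by rw [h, Polynomial.coeff_zero]))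
      filter_upwards [ae_polynomial_eval_ne_zero (μ 0) fiber_ne_zero] with t ht
      rwa [← MvPolynomial.eval_eq_eval_mv_eval', ← split_symm_apply] at ht
    have nonzero_on_prod := (Measure.ae_prod_iff_ae_ae measurableSet_nonzero).mpr
      ((Measure.ae_ae_comm measurableSet_nonzero).mpr nonzero_on_fibers)
    filter_upwards [(measurePreserving_piFinSuccAbove μ 0).quasiMeasurePreserving.ae
      nonzero_on_prod] with x hx
    rwa [split.symm_apply_apply] at hx

theorem ae_mvPolynomial_eval_ne_zero [Fintype σ] (μ : σ → Measure R) [∀ i, SigmaFinite (μ i)]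
    [∀ i, NullSingletonClass (μ i)] {P : MvPolynomial σ R} (hP : P ≠ 0) :
    ∀ᵐ x ∂Measure.pi μ, MvPolynomial.eval x P ≠ 0 := by
  let e := (Fintype.equivFin σ).symm
  have rename_ne_zero : MvPolynomial.rename e.symm P ≠ 0 :=
    (map_ne_zero_iff _ (MvPolynomial.rename_injective _ e.symm.injective)).mpr hP
  have reindex_measurePreserving := (measurePreserving_piCongrLeft μ e).symm
  filter_upwards [reindex_measurePreserving.quasiMeasurePreserving.ae
    (ae_mvPolynomial_fin_eval_ne_zero (fun i => μ (e i)) rename_ne_zero)] with x hx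
  rw [MvPolynomial.eval_rename] at hx
  convert hx
  ext i
  exact congrArg x (e.apply_symm_apply i).symm

end PolynomialZeros

section Rank

theorem exists_comp_comp_eq_id_finrank_range {K V W : Type*} [DivisionRing K]
    [AddCommGroup V] [Module K V] [AddCommGroup W] [Module K W] (f : V →ₗ[K] W)
    [FiniteDimensional K (LinearMap.range f)] :
    ∃ (l : W →ₗ[K] Fin (Module.finrank K (LinearMap.range f)) → K)
      (s : (Fin (Module.finrank K (LinearMap.range f)) → K) →ₗ[K] V),
      l ∘ₗ f ∘ₗ s = LinearMap.id := by
  let e := (Module.finBasis K (LinearMap.range f)).equivFun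
  obtain ⟨s, hs⟩ := f.rangeRestrict.exists_rightInverse_of_surjective f.range_rangeRestrict
  obtain ⟨l, hl⟩ := (LinearMap.range f).subtype.exists_leftInverse_of_injective
    (Submodule.ker_subtype _)
  refine ⟨e ∘ₗ l, s ∘ₗ e.symm, LinearMap.ext fun x => ?_⟩
  have f_section : f (s (e.symm x)) = e.symm x :=
    congrArg Subtype.val (LinearMap.congr_fun hs (e.symm x))
  have l_retraction : l (e.symm x) = e.symm x := LinearMap.congr_fun hl (e.symm x)
  simp [f_section, l_retraction]

theorem exists_mul_mul_eq_one_rank {K m n : Type*} [Field K] [Fintype m] [Fintype n]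
    (M : Matrix m n K) :
    ∃ (L : Matrix (Fin M.rank) m K) (R : Matrix n (Fin M.rank) K), L * (M * R) = 1 := by
  classical
  obtain ⟨l, s, hls⟩ := exists_comp_comp_eq_id_finrank_range (toLin' M)
  refine ⟨LinearMap.toMatrix' l, LinearMap.toMatrix' s, ?_⟩
  have toMatrix_comp := congrArg LinearMap.toMatrix' hls
  rwa [LinearMap.toMatrix'_comp, LinearMap.toMatrix'_comp, LinearMap.toMatrix'_toLin',
    LinearMap.toMatrix'_id] at toMatrix_comp

theorem card_le_rank_of_det_submatrix_mul_ne_zero {R k n p : Type*} [CommRing R] [IsDomain R]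
    [Fintype k] [DecidableEq k] [Fintype n] {A : Matrix p n R} {B : Matrix n k R} {c : k → p}
    (h : (A.submatrix c id * B).det ≠ 0) : Fintype.card k ≤ A.rank :=
  calc Fintype.card k = (A.submatrix c id * B).rank := (rank_of_det_ne_zero h).symm
    _ ≤ (A.submatrix c id).rank := rank_mul_le_left _ _
    _ ≤ A.rank := rank_submatrix_le _ _ _

end Rank

section SketchMinor

variable {R k m p : Type*} [CommRing R] [Fintype m] [Fintype k] [DecidableEq k]

/-- For a generic `p × m` matrix `X`, the minor of `X * B` on the rows selected by `c`, as a
polynomial in the entries of `X`. -/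
noncomputable def sketchMinor (c : k → p) (B : Matrix m k R) : MvPolynomial (p × m) R :=
  ((mvPolynomialX p m R).submatrix c id * B.map (MvPolynomial.C (σ := p × m))).det

theorem eval_sketchMinor (c : k → p) (B : Matrix m k R) (g : p × m → R) :
    MvPolynomial.eval g (sketchMinor c B) =
      ((Matrix.of fun i j => g (i, j)).submatrix c id * B).det := by
  rw [sketchMinor, RingHom.map_det, RingHom.mapMatrix_apply, Matrix.map_mul]
  congr 2 <;> ext <;> simp

theorem sketchMinor_ne_zero [Nontrivial R] {c : k → p} (hc : Function.Injective c)
    {L : Matrix k m R} {B : Matrix m k R} (hLB : L * B = 1) : sketchMinor c B ≠ 0 := by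
  intro h
  have eval_eq := eval_sketchMinor c B fun ij => Function.extend c L 0 ij.1 ij.2
  have rows_eq : (Matrix.of fun i j => Function.extend c L 0 i j).submatrix c id = L := by
    ext i j
    exact congrFun (hc.extend_apply L 0 i) j
  rw [h, map_zero, rows_eq, hLB, det_one] at eval_eq
  exact zero_ne_one eval_eq

end SketchMinor

theorem stmt_7_general {K m n p : Type*} [Field K] [MeasurableSpace K] [MeasurableAdd₂ K]
    [MeasurableMul₂ K] [MeasurableSingletonClass K] [Fintype m] [Fintype n] [Fintype p]
    (μ : p × m → Measure K) [∀ ij, SigmaFinite (μ ij)] [∀ ij, NullSingletonClass (μ ij)]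
    (M : Matrix m n K) (hp : M.rank ≤ Fintype.card p) :
    ∀ᵐ g ∂Measure.pi μ, ((Matrix.of fun i j => g (i, j) : Matrix p m K) * M).rank = M.rank := by
  obtain ⟨L, R, hLR⟩ := exists_mul_mul_eq_one_rank M
  obtain ⟨c⟩ : Nonempty (Fin M.rank ↪ p) :=
    Function.Embedding.nonempty_of_card_le (by rwa [Fintype.card_fin])
  filter_upwards [ae_mvPolynomial_eval_ne_zero μ (sketchMinor_ne_zero c.injective hLR)] with g hg
  rw [eval_sketchMinor, ← Matrix.mul_assoc] at hg
  refine le_antisymm (rank_mul_le_right _ _) ?_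
  simpa using card_le_rank_of_det_submatrix_mul_ne_zero
    (A := (Matrix.of fun i j => g (i, j)) * M) (c := c) hg

section ComplexEntries

theorem measurePreserving_pi_curry {ι κ X : Type*} [Fintype ι] [Fintype κ] [MeasurableSpace X]
    (μ : ι → κ → Measure X) [∀ i j, IsProbabilityMeasure (μ i j)] :
    MeasurePreserving (MeasurableEquiv.curry ι κ X) (Measure.pi fun ij : ι × κ => μ ij.1 ij.2)
      (Measure.pi fun i => Measure.pi (μ i)) where
  measurable := (MeasurableEquiv.curry ι κ X).measurable
  map_eq := by simpa only [Measure.infinitePi_eq_pi] using Measure.infinitePi_map_curry μ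

/-- The law on `ℂ` of a random number with independent real and imaginary parts, of laws `ν false`
and `ν true`. -/
noncomputable def complexLaw (ν : Bool → Measure ℝ) : Measure ℂ :=
  (Measure.pi ν).map fun x => ⟨x false, x true⟩

theorem measurable_complex_mk_bool : Measurable fun x : Bool → ℝ => Complex.mk (x false) (x true) :=
  Complex.measurableEquivRealProd.symm.measurable.comp (g := Complex.measurableEquivRealProd.symm)
    (f := fun x : Bool → ℝ => (x false, x true)) (by fun_prop)

instance isProbabilityMeasure_complexLaw (ν : Bool → Measure ℝ) [∀ b, IsProbabilityMeasure (ν b)] :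
    IsProbabilityMeasure (complexLaw ν) :=
  Measure.isProbabilityMeasure_map measurable_complex_mk_bool.aemeasurable

instance nullSingletonClass_complexLaw (ν : Bool → Measure ℝ) [∀ b, SigmaFinite (ν b)]
    [∀ b, NullSingletonClass (ν b)] :
    NullSingletonClass (complexLaw ν) where
  measure_singleton z := by
    rw [complexLaw, Measure.map_apply measurable_complex_mk_bool (measurableSet_singleton z)]
    refine Set.Subsingleton.measure_zero (fun x hx y hy => ?_) _
    have mk_eq := Complex.ext_iff.mp (Eq.trans hx (Eq.symm hy))
    exact funext (Bool.forall_bool.mpr mk_eq)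

theorem measurePreserving_pi_complex_mk {ι : Type*} [Fintype ι] (μ : ι → Bool → Measure ℝ)
    [∀ i b, IsProbabilityMeasure (μ i b)] :
    MeasurePreserving (fun (g : ι × Bool → ℝ) i => Complex.mk (g (i, false)) (g (i, true)))
      (Measure.pi fun ib => μ ib.1 ib.2) (Measure.pi fun i => complexLaw (μ i)) :=
  (measurePreserving_pi _ _ fun _ => measurable_complex_mk_bool.measurePreserving _).comp
    (measurePreserving_pi_curry μ)

end ComplexEntries

theorem stmt_7 (m n p r : ℕ) (M : Matrix (Fin m) (Fin n) ℂ)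
    (hM : M.rank = r) (hp : r ≤ p) :
    ∀ᵐ g ∂(Measure.pi fun _ : (Fin p × Fin m) × Bool => gaussianReal 0 1),
      ((Matrix.of fun i j =>
          Complex.mk (g ((i, j), false)) (g ((i, j), true)) :
            Matrix (Fin p) (Fin m) ℂ) * M).rank = r := by
  subst hM
  have := nullSingletonClass_gaussianReal (μ := 0) one_ne_zero
  exact (measurePreserving_pi_complex_mk fun _ _ => gaussianReal 0 1).quasiMeasurePreserving.ae
    (stmt_7_general _ M (by rwa [Fintype.card_fin]))
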